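/- Let 𝔄 = ℚ[t^{±1}]/((t² + 1)³) ⊕ ℚ[t^{±1}]/((t + 1)²). Then dim_ℚ ℋ(𝔄) = 4. -/

import Mathlib

open LaurentPolynomial TensorProduct

set_option synthInstance.maxHeartbeats 1000000
set_option maxHeartbeats 1000000
noncomputable section

abbrev LQuot (K : Type) [Field K] (p : LaurentPolynomial K) : Type :=
  LaurentPolynomial K ⧸ Ideal.span {p}

/-- The wedge `a ∧ b ∧ c` as an element of the third exterior power. -/
def wedge3 (K : Type) [Field K] (M : Type) [AddCommGroup M] [Module K M] (a b c : M) :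
    ⋀[K]^3 M :=
  ⟨ExteriorAlgebra.ιMulti K 3 ![a, b, c],
    ExteriorAlgebra.ιMulti_range K 3 (Set.mem_range_self _)⟩

/-- The holonomy subspace of the third exterior power: the `K`-span of the elements
`β₁ ∧ β₂ ∧ β₃ - tβ₁ ∧ tβ₂ ∧ tβ₃`. -/
def wedgeHol (K : Type) [Field K] (M : Type) [AddCommGroup M]
    [Module (LaurentPolynomial K) M] [Module K M]
    [IsScalarTower K (LaurentPolynomial K) M] :
    Submodule K ↥(⋀[K]^3 M) :=
  Submodule.span K { x | ∃ a b c : M,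
    x = wedge3 K M a b c -
      wedge3 K M ((T 1 : LaurentPolynomial K) • a) ((T 1 : LaurentPolynomial K) • b)
        ((T 1 : LaurentPolynomial K) • c) }

/-- `ℋ(M)`: the quotient of the third exterior power by the holonomy subspace. -/
abbrev Hcal (K : Type) [Field K] (M : Type) [AddCommGroup M]
    [Module (LaurentPolynomial K) M] [Module K M]
    [IsScalarTower K (LaurentPolynomial K) M] : Type :=
  ↥(⋀[K]^3 M) ⧸ wedgeHol K M

/-- The module `𝔄 = ℚ[t^{±1}]/((t²+1)³) ⊕ ℚ[t^{±1}]/((t+1)²)`. -/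
abbrev Amod : Type := LQuot ℚ ((T 2 + 1) ^ 3) × LQuot ℚ ((T 1 + 1) ^ 2)

theorem bbc_aux (P Q R : ℕ → ℕ → ℚ) (hP : ∀ i j, P i j = - P j i) (P3 : ∀ i, P i 3 = 0)
    (Q3 : ∀ i, Q 3 i = 0) (r1 : ∀ i j, P i j = - R i j)
    (r2 : ∀ i j, Q i j = - Q j i + Q (j+1) i)
    (r3 : ∀ i j, R i j = - P i j + P (i+1) j + P i (j+1) - P (i+1) (j+1))
    (h1 : P 0 1 = 0) (h2 : Q 0 1 = 0) :
    (∀ i j, i < 3 → j < 3 → P i j = 0) ∧ (∀ i j, i < 3 → j < 3 → R i j = 0) ∧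
    (∀ i j, i < 3 → j < 3 → Q i j = 0) := by
  have P3' : ∀ i, P 3 i = 0 := fun i => by rw [hP, P3, neg_zero]
  have hd : ∀ i, P i i = 0 := fun i => by linarith [hP i i]
  have p12 : P 1 2 = 0 := by linarith [r1 0 2, r3 0 2, P3 0, P3 1]
  have p02 : P 0 2 = 0 := by linarith [r1 0 1, r3 0 1, hd 1]
  have hPz : ∀ i j, i < 3 → j < 3 → P i j = 0 := by
    intro i j hi hj
    interval_cases i <;> interval_cases j <;>
      linarith [hP 0 1, hP 0 2, hP 1 2, hd 0, hd 1, hd 2]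
  have q22 : Q 2 2 = 0 := by linarith [r2 2 2, Q3 2]
  have q12 : Q 1 2 = 0 := by linarith [r2 0 2, r2 2 0, Q3 0, r2 1 2, r2 2 1, Q3 1]
  have q21 : Q 2 1 = 0 := by linarith [r2 0 2, r2 2 0, Q3 0, r2 1 2, r2 2 1, Q3 1]
  have q11 : Q 1 1 = 0 := by linarith [r2 1 1]
  have q10 : Q 1 0 = 0 := by linarith [r2 1 0]
  have q20 : Q 2 0 = 0 := by linarith [r2 0 1]
  have q02 : Q 0 2 = 0 := by linarith [r2 2 0]
  have q00 : Q 0 0 = 0 := by linarith [r2 0 0]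
  refine ⟨hPz, fun i j hi hj => by linarith [r1 i j, hPz i j hi hj], ?_⟩
  intro i j hi hj
  interval_cases i <;> interval_cases j <;> assumption

theorem bbb_aux (X Y : ℕ → ℕ → ℕ → ℚ) (hX : ∀ i j k, X i j k = - X j i k)
    (hX3 : ∀ i j k, 3 ≤ i → X i j k = 0) (hY3 : ∀ i j k, 3 ≤ i → Y i j k = 0)
    (r1 : ∀ i j k, X i j k = - Y k i j + Y (k+1) i j)
    (r2 : ∀ i j k, Y k i j = X i j k - X (i+1) j k - X i (j+1) k + X (i+1) (j+1) k) :
    (∀ i j k, X i j k = 0) ∧ (∀ i j k, Y i j k = 0) := by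
  have key : ∀ n i j k, 9 ≤ i + j + k + n → X i j k = 0 ∧ Y k i j = 0 := by
    intro n
    induction n with
    | zero =>
      intro i j k h
      have hx : ∀ i j k, 9 ≤ i + j + k → Y k i j = 0 → X i j k = 0 := by
        intro i j k h hy
        by_cases hi : 3 ≤ i
        · exact hX3 i j k hi
        by_cases hj : 3 ≤ j
        · rw [hX, hX3 _ _ _ hj, neg_zero]
        rw [r1, hy, hY3 _ _ _ (by omega)]; simp
      have hy : Y k i j = 0 := by
        by_cases hk : 3 ≤ k
        · exact hY3 _ _ _ hk
        have hx' : ∀ i j k, (3 ≤ i ∨ 3 ≤ j) → X i j k = 0 := by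
          rintro i j k (h | h)
          · exact hX3 _ _ _ h
          · rw [hX, hX3 _ _ _ h, neg_zero]
        rw [r2, hx' _ _ _ (by omega), hx' _ _ _ (by omega), hx' _ _ _ (by omega),
          hx' _ _ _ (by omega)]
        simp
      exact ⟨hx i j k (by omega) hy, hy⟩
    | succ n ih =>
      intro i j k h
      have h1 := (ih i j (k+1) (by omega)).2
      have h2 := (ih (i+1) j k (by omega)).1
      have h3 := (ih i (j+1) k (by omega)).1
      have h4 := (ih (i+1) (j+1) k (by omega)).1
      have a := r1 i j k
      have b := r2 i j k
      constructor <;> linarith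
  exact ⟨fun i j k => (key 9 i j k (by omega)).1, fun i j k => (key 9 j k i (by omega)).2⟩

set_option linter.unusedSimpArgs false in
set_option linter.unusedTactic false in
theorem vanish_aux {M : Type} [AddCommGroup M] (g : M → M → M → ℚ)
    (hadd : ∀ a a' b c, g (a + a') b c = g a b c + g a' b c)
    (s12 : ∀ a b c, g a b c = - g b a c) (s23 : ∀ a b c, g a b c = - g a c b)
    (t : M → M) (inv : ∀ a b c, g a b c = g (t a) (t b) (t c))
    (e f : ℕ → M) (c d : M) (he : ∀ k, 3 ≤ k → e k = 0)
    (hf : ∀ k, 3 ≤ k → f k = 0) (te : ∀ k, t (e k) = f k) (tf : ∀ k, t (f k) = - e k + e (k+1))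
    (tc : t c = - c + d) (td : t d = - d)
    (h1 : g (e 0) (e 1) c = 0) (h2 : g (e 0) (f 1) c = 0)
    (h3 : g (e 0) (e 1) d = 0) (h4 : g (e 0) (f 1) d = 0)
    (S : Set M)
    (hS : S = {x | (∃ i, i < 3 ∧ x = e i) ∨ (∃ i, i < 3 ∧ x = f i) ∨ x = c ∨ x = d}) :
    ∀ x ∈ S, ∀ y ∈ S, ∀ z ∈ S, g x y z = 0 := by
  have z1 : ∀ b c, g 0 b c = 0 := fun b c => by have := hadd 0 0 b c; simp at this; exact this
  have n1 : ∀ a b c, g (-a) b c = - g a b c := fun a b c => by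
    have := hadd a (-a) b c; rw [add_neg_cancel, z1] at this; linarith
  have n2 : ∀ a b c, g a (-b) c = - g a b c := fun a b c => by rw [s12, n1, s12 b]; ring
  have n3 : ∀ a b c, g a b (-c) = - g a b c := fun a b c => by rw [s23, n2, s23 _ c]; ring
  have z2 : ∀ b c, g b 0 c = 0 := fun b c => by rw [s12, z1, neg_zero]
  have z3 : ∀ b c, g b c 0 = 0 := fun b c => by rw [s23, z2, neg_zero]
  have a2 : ∀ a b b' c, g a (b + b') c = g a b c + g a b' c := fun a b b' c => by
    rw [s12, hadd, s12 a, s12 a]; ring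
  have a3 : ∀ a b c c', g a b (c + c') = g a b c + g a b c' := fun a b c c' => by
    rw [s23, a2, s23 a b, s23 a b]; ring
  have d1 : ∀ a c, g a a c = 0 := fun a c => by have := s12 a a c; linarith
  have d2 : ∀ a c, g a c c = 0 := fun a c => by have := s23 a c c; linarith
  have e3 : e 3 = 0 := he 3 le_rfl
  have R1 : ∀ i j z, g (e i) (e j) z = g (f i) (f j) (t z) := fun i j z => by
    rw [inv, te, te]
  have R2 : ∀ i j z, g (e i) (f j) z = g (e j) (f i) (t z) - g (e (j+1)) (f i) (t z) :=
    fun i j z => by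
      rw [inv, te, tf, a2, n2, s12 _ (e j), s12 _ (e (j+1))]; ring
  have R3 : ∀ i j z, g (f i) (f j) z = g (e i) (e j) (t z) - g (e (i+1)) (e j) (t z)
      - g (e i) (e (j+1)) (t z) + g (e (i+1)) (e (j+1)) (t z) := fun i j z => by
    rw [inv, tf, tf, a2, hadd, hadd, n1, n1, n2, n2]; ring
  obtain ⟨eed, ffd, efd⟩ := bbc_aux (fun i j => g (e i) (e j) d) (fun i j => g (e i) (f j) d)
    (fun i j => g (f i) (f j) d) (fun i j => s12 _ _ _) (fun i => by simp [e3, z2])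
    (fun i => by simp [e3, z1]) (fun i j => by simp only [R1, td, n3])
    (fun i j => by beta_reduce; rw [R2, td, n3, n3]; ring)
    (fun i j => by beta_reduce; rw [R3, td, n3, n3, n3, n3]; ring) h3 h4
  have eed' : ∀ i j, g (e i) (e j) d = 0 := fun i j => by
    by_cases hi : 3 ≤ i
    · rw [he i hi, z1]
    by_cases hj : 3 ≤ j
    · rw [he j hj, z2]
    exact eed i j (by omega) (by omega)
  have ffd' : ∀ i j, g (f i) (f j) d = 0 := fun i j => by
    have := R1 i j d
    rw [td, n3, eed'] at this; linarith
  have efd' : ∀ i j, g (e i) (f j) d = 0 := fun i j => by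
    by_cases hi : 3 ≤ i
    · rw [he i hi, z1]
    by_cases hj : 3 ≤ j
    · rw [hf j hj, z2]
    exact efd i j (by omega) (by omega)
  obtain ⟨eec, ffc, efc⟩ := bbc_aux (fun i j => g (e i) (e j) c) (fun i j => g (e i) (f j) c)
    (fun i j => g (f i) (f j) c) (fun i j => s12 _ _ _) (fun i => by simp [e3, z2])
    (fun i => by simp [e3, z1]) (fun i j => by simp only [R1, tc, a3, ffd', n3, add_zero])
    (fun i j => by beta_reduce; rw [R2, tc]; simp only [a3, n3, efd']; ring)
    (fun i j => by beta_reduce; rw [R3, tc]; simp only [a3, n3, eed']; ring) h1 h2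
  obtain ⟨eef, eff⟩ := bbb_aux (fun i j k => g (e i) (e j) (f k)) (fun i j k => g (e i) (f j) (f k))
    (fun i j k => s12 _ _ _) (fun i j k h => by simp [he i h, z1])
    (fun i j k h => by simp [he i h, z1])
    (fun i j k => by
      beta_reduce
      rw [R1, tf, a3, n3, s23 _ _ (e k), s12 _ (e k), s23 _ _ (e (k+1)), s12 _ (e (k+1))]; ring)
    (fun i j k => by
      beta_reduce
      rw [inv, te, tf, tf]
      simp only [a2, a3, n2, n3]
      have q : ∀ i j, g (f k) (e i) (e j) = g (e i) (e j) (f k) := fun i j => by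
        rw [s12, s23]; ring
      simp only [q]; ring)
  beta_reduce at eef eff
  have ecd : ∀ i, g (e i) c d = g (f i) c d := fun i => by
    rw [inv, te, tc, td]; simp only [a2, n2, n3, d2]; ring
  have fcd : ∀ i, g (f i) c d = - g (e i) c d + g (e (i+1)) c d := fun i => by
    rw [inv, tf, tc, td]; simp only [a2, hadd, n1, n2, n3, d2]; ring
  have ecd0 : ∀ n i, 3 ≤ i + n → g (e i) c d = 0 := by
    intro n
    induction n with
    | zero => intro i hi; rw [he i (by omega), z1]
    | succ n ih =>
      intro i hi
      have := ih (i+1) (by omega)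
      linarith [ecd i, fcd i]
  have ecd1 : ∀ i, g (e i) c d = 0 := fun i => ecd0 3 i (by omega)
  have fcd1 : ∀ i, g (f i) c d = 0 := fun i => by rw [← ecd, ecd1]
  have eee0 : ∀ n i j k, 9 ≤ i + j + k + n → g (e i) (e j) (e k) = 0 := by
    intro n
    induction n with
    | zero =>
      intro i j k h
      by_cases hi : 3 ≤ i
      · rw [he i hi, z1]
      by_cases hj : 3 ≤ j
      · rw [he j hj, z2]
      rw [he k (by omega), z3]
    | succ n ih =>
      intro i j k h
      have h : g (e i) (e j) (e k) = - g (e i) (e j) (e k) := by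
        conv_lhs => rw [R1, te, inv, tf, tf, tf]
        simp only [a2, a3, hadd, n1, n2, n3]
        rw [ih (i+1) j k (by omega), ih i (j+1) k (by omega), ih i j (k+1) (by omega),
          ih (i+1) (j+1) k (by omega), ih i (j+1) (k+1) (by omega), ih (i+1) j (k+1) (by omega),
          ih (i+1) (j+1) (k+1) (by omega)]
        ring
      linarith
  have eee : ∀ i j k, g (e i) (e j) (e k) = 0 := fun i j k => eee0 9 i j k (by omega)
  have fff : ∀ i j k, g (f i) (f j) (f k) = 0 := by
    intro i j k
    rw [← te i, ← te j, ← te k, ← inv, eee]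
  have eec' : ∀ i j, g (e i) (e j) c = 0 := fun i j => by
    by_cases hi : 3 ≤ i
    · rw [he i hi, z1]
    by_cases hj : 3 ≤ j
    · rw [he j hj, z2]
    exact eec i j (by omega) (by omega)
  have ffc' : ∀ i j, g (f i) (f j) c = 0 := fun i j => by
    by_cases hi : 3 ≤ i
    · rw [hf i hi, z1]
    by_cases hj : 3 ≤ j
    · rw [hf j hj, z2]
    exact ffc i j (by omega) (by omega)
  have efc' : ∀ i j, g (e i) (f j) c = 0 := fun i j => by
    by_cases hi : 3 ≤ i
    · rw [he i hi, z1]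
    by_cases hj : 3 ≤ j
    · rw [hf j hj, z2]
    exact efc i j (by omega) (by omega)
  subst hS
  rintro x (⟨i, -, rfl⟩ | ⟨i, -, rfl⟩ | rfl | rfl) y (⟨j, -, rfl⟩ | ⟨j, -, rfl⟩ | rfl | rfl)
    z (⟨k, -, rfl⟩ | ⟨k, -, rfl⟩ | rfl | rfl)
  all_goals first
    | (simp only [eee, fff, eef, eff, eec', efc', ffc', eed', efd', ffd', ecd1, fcd1, d1, d2]; done)
    | (rw [s12]; simp only [eee, fff, eef, eff, eec', efc', ffc', eed', efd', ffd', ecd1, fcd1, d1, d2]; simp; done)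
    | (rw [s23]; simp only [eee, fff, eef, eff, eec', efc', ffc', eed', efd', ffd', ecd1, fcd1, d1, d2]; simp; done)
    | (rw [s12, s23]; simp only [eee, fff, eef, eff, eec', efc', ffc', eed', efd', ffd', ecd1, fcd1, d1, d2]; simp; done)
    | (rw [s23, s12]; simp only [eee, fff, eef, eff, eec', efc', ffc', eed', efd', ffd', ecd1, fcd1, d1, d2]; simp; done)
    | (rw [s12, s23, s12]; simp only [eee, fff, eef, eff, eec', efc', ffc', eed', efd', ffd', ecd1, fcd1, d1, d2]; simp; done)

theorem span_aux {M : Type} [AddCommGroup M] [Module ℚ M] (g : M → M → M → ℚ)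
    (hadd : ∀ a a' b c, g (a + a') b c = g a b c + g a' b c)
    (hsm : ∀ (r : ℚ) a b c, g (r • a) b c = r * g a b c)
    (s12 : ∀ a b c, g a b c = - g b a c) (s23 : ∀ a b c, g a b c = - g a c b)
    (S : Set M) (hS : Submodule.span ℚ S = ⊤) (h : ∀ x ∈ S, ∀ y ∈ S, ∀ z ∈ S, g x y z = 0) :
    ∀ x y z, g x y z = 0 := by
  have step : ∀ y z, (∀ x ∈ S, g x y z = 0) → ∀ x, g x y z = 0 := by
    intro y z hx x
    have hz : g 0 y z = 0 := by have := hsm 0 0 y z; simpa using this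
    have : x ∈ Submodule.span ℚ S := hS ▸ Submodule.mem_top
    induction this using Submodule.span_induction with
    | mem x h => exact hx x h
    | zero => exact hz
    | add a b _ _ ha hb => rw [hadd, ha, hb, add_zero]
    | smul r a _ ha => rw [hsm, ha, mul_zero]
  have h1 : ∀ y ∈ S, ∀ z ∈ S, ∀ x, g x y z = 0 := fun y hy z hz =>
    step y z (fun x hx => h x hx y hy z hz)
  have h2 : ∀ z ∈ S, ∀ x y, g x y z = 0 := fun z hz x y => by
    rw [s12, step x z (fun y hy => by rw [s12, h1 y hy z hz, neg_zero]), neg_zero]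
  intro x y z
  rw [s23, s12, step x y (fun z hz => by rw [s12, s23, h2 z hz]; simp)]; simp

theorem spanning_aux {M : Type} [AddCommGroup M] [Module (LaurentPolynomial ℚ) M] [Module ℚ M]
    [IsScalarTower ℚ (LaurentPolynomial ℚ) M] (u c : M) (e f : ℕ → M)
    (hgen : ∀ x : M, ∃ p q : LaurentPolynomial ℚ, x = p • u + q • c)
    (he : ∀ k, e k = ((T 2 + 1) ^ k : LaurentPolynomial ℚ) • u)
    (hf : ∀ k, f k = (T 1 * (T 2 + 1) ^ k : LaurentPolynomial ℚ) • u)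
    (he3 : ∀ k, 3 ≤ k → e k = 0) (d : M) (hd : d = (T 1 + 1 : LaurentPolynomial ℚ) • c)
    (hd0 : ((T 1 + 1) ^ 2 : LaurentPolynomial ℚ) • c = 0)
    (S : Set M)
    (hS : S = {x | (∃ i, i < 3 ∧ x = e i) ∨ (∃ i, i < 3 ∧ x = f i) ∨ x = c ∨ x = d}) :
    Submodule.span ℚ S = ⊤ := by
  set W := Submodule.span ℚ S with hW
  have We : ∀ k, e k ∈ W := fun k => by
    by_cases hk : 3 ≤ k
    · rw [he3 k hk]; exact W.zero_mem
    · exact Submodule.subset_span (by rw [hS]; exact Or.inl ⟨k, by omega, rfl⟩)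
  have ef : ∀ k, (T 1 : LaurentPolynomial ℚ) • e k = f k := fun k => by rw [he, hf, mul_smul]
  have Wf : ∀ k, f k ∈ W := fun k => by
    by_cases hk : 3 ≤ k
    · rw [← ef, he3 k hk, smul_zero]; exact W.zero_mem
    · exact Submodule.subset_span (by rw [hS]; exact Or.inr (Or.inl ⟨k, by omega, rfl⟩))
  have Wc : c ∈ W := Submodule.subset_span (by rw [hS]; exact Or.inr (Or.inr (Or.inl rfl)))
  have Wd : d ∈ W := Submodule.subset_span (by rw [hS]; exact Or.inr (Or.inr (Or.inr rfl)))
  have T2 : (T 2 : LaurentPolynomial ℚ) = T 1 * T 1 := by rw [← T_add]; norm_num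
  have Tm : (T (-1) : LaurentPolynomial ℚ) * T 1 = 1 := by rw [← T_add]; norm_num
  have ff : ∀ k, (T 1 : LaurentPolynomial ℚ) • f k = - e k + e (k+1) := fun k => by
    rw [he, hf, he, ← neg_smul, ← add_smul, smul_smul]; congr 1; rw [T2]; ring
  have cc : (T 1 : LaurentPolynomial ℚ) • c = - c + d := by
    rw [hd, add_smul, one_smul]; abel
  have dd : (T 1 : LaurentPolynomial ℚ) • d = - d := by
    have : (T 1 : LaurentPolynomial ℚ) • d + d = 0 := by
      rw [hd, smul_smul, ← add_smul, ← hd0]; congr 1; ring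
    exact eq_neg_of_add_eq_zero_left this
  have inv1 : ∀ x y : M, (T 1 : LaurentPolynomial ℚ) • x = y →
      (T (-1) : LaurentPolynomial ℚ) • y = x := fun x y h => by
    rw [← h, smul_smul, Tm, one_smul]
  have fe' : ∀ k, (T (-1) : LaurentPolynomial ℚ) • f k = e k := fun k => inv1 _ _ (ef k)
  have ee' : ∀ n k, 3 ≤ k + n → (T (-1) : LaurentPolynomial ℚ) • e k ∈ W := by
    intro n
    induction n with
    | zero => intro k hk; rw [he3 k (by omega), smul_zero]; exact W.zero_mem
    | succ n ih =>
      intro k hk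
      have h := inv1 _ _ (ff k)
      rw [smul_add, smul_neg] at h
      have : (T (-1) : LaurentPolynomial ℚ) • e k =
          (T (-1) : LaurentPolynomial ℚ) • e (k+1) - f k := by rw [← h]; abel
      rw [this]; exact W.sub_mem (ih _ (by omega)) (Wf k)
  have dd' : (T (-1) : LaurentPolynomial ℚ) • d = - d := by
    have := inv1 _ _ dd
    rw [smul_neg] at this; rw [← this, neg_neg, this]
  have cc' : (T (-1) : LaurentPolynomial ℚ) • c = - c - d := by
    have := inv1 _ _ cc
    rw [smul_add, smul_neg, dd'] at this
    have h2 : (T (-1) : LaurentPolynomial ℚ) • c =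
        -(-((T (-1) : LaurentPolynomial ℚ) • c) + - d) - d := by abel
    rw [h2, this]
  have cl : ∀ s : LaurentPolynomial ℚ, (∀ x ∈ S, s • x ∈ W) → ∀ x ∈ W, s • x ∈ W := by
    intro s hs x hx
    induction hx using Submodule.span_induction with
    | mem x h => exact hs x h
    | zero => rw [smul_zero]; exact W.zero_mem
    | add a b _ _ ha hb => rw [smul_add]; exact W.add_mem ha hb
    | smul r a _ ha => rw [smul_algebra_smul_comm]; exact W.smul_mem _ ha
  have cl1 := cl (T 1) (by
    rw [hS]
    rintro x (⟨i, -, rfl⟩ | ⟨i, -, rfl⟩ | rfl | rfl)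
    · rw [ef]; exact Wf i
    · rw [ff]; exact W.add_mem (W.neg_mem (We i)) (We _)
    · rw [cc]; exact W.add_mem (W.neg_mem Wc) Wd
    · rw [dd]; exact W.neg_mem Wd)
  have cl2 := cl (T (-1)) (by
    rw [hS]
    rintro x (⟨i, -, rfl⟩ | ⟨i, -, rfl⟩ | rfl | rfl)
    · exact ee' 3 i (by omega)
    · rw [fe']; exact We i
    · rw [cc']; exact W.sub_mem (W.neg_mem Wc) Wd
    · rw [dd']; exact W.neg_mem Wd)
  have clT : ∀ n : ℤ, ∀ x ∈ W, (T n : LaurentPolynomial ℚ) • x ∈ W := by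
    intro n
    induction n using Int.induction_on with
    | zero => intro x hx; rw [T_zero, one_smul]; exact hx
    | succ n ih => intro x hx; rw [T_add, mul_smul]; exact ih _ (cl1 x hx)
    | pred n ih => intro x hx; rw [sub_eq_add_neg, T_add, mul_smul]; exact ih _ (cl2 x hx)
  have clp : ∀ p : LaurentPolynomial ℚ, ∀ x ∈ W, p • x ∈ W := by
    intro p x hx
    induction p using LaurentPolynomial.induction_on' with
    | add p q hp hq => rw [add_smul]; exact W.add_mem hp hq
    | C_mul_T n a =>
      rw [← smul_eq_C_mul, smul_assoc]; exact W.smul_mem _ (clT n x hx)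
  rw [eq_top_iff]
  rintro x -
  obtain ⟨p, q, rfl⟩ := hgen x
  have hu : u ∈ W := by have := We 0; rwa [he, pow_zero, one_smul] at this
  exact W.add_mem (clp p u hu) (clp q c Wc)

theorem alt_props {M : Type} [AddCommGroup M] [Module ℚ M] (F : M [⋀^Fin 3]→ₗ[ℚ] ℚ) :
    (∀ a a' b c, F ![a + a', b, c] = F ![a, b, c] + F ![a', b, c]) ∧
    (∀ (r : ℚ) a b c, F ![r • a, b, c] = r * F ![a, b, c]) ∧
    (∀ a b c, F ![a, b, c] = - F ![b, a, c]) ∧ (∀ a b c, F ![a, b, c] = - F ![a, c, b]) := by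
  refine ⟨fun a a' b c => F.map_vecCons_add _ _ _, fun r a b c => F.map_vecCons_smul _ _ _,
    fun a b c => ?_, fun a b c => ?_⟩
  · rw [← F.map_swap ![b, a, c] (i := 0) (j := 1) (by decide)]
    congr 1; ext i; fin_cases i <;> rfl
  · rw [← F.map_swap ![a, c, b] (i := 1) (j := 2) (by decide)]
    congr 1; ext i; fin_cases i <;> rfl

def hmk (M : Type) [AddCommGroup M] [Module (LaurentPolynomial ℚ) M] [Module ℚ M]
    [IsScalarTower ℚ (LaurentPolynomial ℚ) M] (a b c : M) : Hcal ℚ M :=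
  (wedgeHol ℚ M).mkQ (wedge3 ℚ M a b c)

theorem wedge3_eq (M : Type) [AddCommGroup M] [Module ℚ M] (a b c : M) :
    wedge3 ℚ M a b c = exteriorPower.ιMulti ℚ 3 ![a, b, c] := rfl

theorem hmk_inv (M : Type) [AddCommGroup M] [Module (LaurentPolynomial ℚ) M] [Module ℚ M]
    [IsScalarTower ℚ (LaurentPolynomial ℚ) M] (a b c : M) :
    hmk M a b c = hmk M ((T 1 : LaurentPolynomial ℚ) • a) ((T 1 : LaurentPolynomial ℚ) • b)
        ((T 1 : LaurentPolynomial ℚ) • c) := by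
  unfold hmk
  rw [← sub_eq_zero, ← map_sub, Submodule.mkQ_apply, Submodule.Quotient.mk_eq_zero]
  exact Submodule.subset_span ⟨a, b, c, rfl⟩

theorem hcal_lift (M : Type) [AddCommGroup M] [Module (LaurentPolynomial ℚ) M] [Module ℚ M]
    [IsScalarTower ℚ (LaurentPolynomial ℚ) M] (F : M [⋀^Fin 3]→ₗ[ℚ] ℂ)
    (hF : ∀ a b c, F ![a, b, c] = F ![(T 1 : LaurentPolynomial ℚ) • a,
      (T 1 : LaurentPolynomial ℚ) • b, (T 1 : LaurentPolynomial ℚ) • c]) :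
    ∃ L : Hcal ℚ M →ₗ[ℚ] ℂ, ∀ a b c, L (hmk M a b c) = F ![a, b, c] := by
  have hk : wedgeHol ℚ M ≤ LinearMap.ker (exteriorPower.alternatingMapLinearEquiv F) := by
    unfold wedgeHol
    rw [Submodule.span_le]
    rintro x ⟨a, b, c, rfl⟩
    simp only [SetLike.mem_coe, LinearMap.mem_ker, map_sub, wedge3_eq,
      exteriorPower.alternatingMapLinearEquiv_apply_ιMulti]
    rw [← hF, sub_self]
  refine ⟨(wedgeHol ℚ M).liftQ _ hk, fun a b c => ?_⟩
  unfold hmk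
  rw [Submodule.mkQ_apply, Submodule.liftQ_apply, wedge3_eq,
    exteriorPower.alternatingMapLinearEquiv_apply_ιMulti]

def detQ : (Fin 3 → ℂ) [⋀^Fin 3]→ₗ[ℚ] ℂ :=
  { MultilinearMap.restrictScalars ℚ
      (Matrix.detRowAlternating (n := Fin 3) (R := ℂ)).toMultilinearMap with
    map_eq_zero_of_eq' := (Matrix.detRowAlternating (n := Fin 3) (R := ℂ)).map_eq_zero_of_eq' }

def detForm {M : Type} [AddCommGroup M] [Module ℚ M] (x y z : M →ₗ[ℚ] ℂ) : M [⋀^Fin 3]→ₗ[ℚ] ℂ :=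
  detQ.compLinearMap (LinearMap.pi ![x, y, z])

theorem detForm_apply {M : Type} [AddCommGroup M] [Module ℚ M] (x y z : M →ₗ[ℚ] ℂ) (a b c : M) :
    detForm x y z ![a, b, c] = x a * y b * z c - x a * z b * y c - y a * x b * z c
      + y a * z b * x c + z a * x b * y c - z a * y b * x c := by
  have : detForm x y z ![a, b, c] = 
      Matrix.det (Matrix.of ![![x a, y a, z a], ![x b, y b, z b], ![x c, y c, z c]]) := by
    have h : detForm x y z ![a, b, c] = Matrix.det (R := ℂ)
      (Matrix.of fun i => LinearMap.pi ![x, y, z] (![a, b, c] i)) := rfl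
    rw [h]
    congr 1
    ext i j
    fin_cases i <;> fin_cases j <;> rfl
  rw [this, Matrix.det_fin_three]
  rfl

theorem main_aux (M : Type) [AddCommGroup M] [Module (LaurentPolynomial ℚ) M] [Module ℚ M]
    [IsScalarTower ℚ (LaurentPolynomial ℚ) M] (u c : M)
    (hgen : ∀ x : M, ∃ p q : LaurentPolynomial ℚ, x = p • u + q • c)
    (hu0 : ((T 2 + 1) ^ 3 : LaurentPolynomial ℚ) • u = 0)
    (hc0 : ((T 1 + 1) ^ 2 : LaurentPolynomial ℚ) • c = 0)
    (x0 x1 x2 z0 z1 : M →ₗ[ℚ] ℂ)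
    (tx0 : ∀ a, x0 ((T 1 : LaurentPolynomial ℚ) • a) = Complex.I * x0 a)
    (tx1 : ∀ a, x1 ((T 1 : LaurentPolynomial ℚ) • a) = Complex.I * (x1 a + x0 a))
    (tx2 : ∀ a, x2 ((T 1 : LaurentPolynomial ℚ) • a) = Complex.I * (x2 a + x1 a + x0 a / 2))
    (tz0 : ∀ a, z0 ((T 1 : LaurentPolynomial ℚ) • a) = - z0 a)
    (tz1 : ∀ a, z1 ((T 1 : LaurentPolynomial ℚ) • a) = - (z1 a + z0 a))
    (ux0 : x0 u = 1) (ux1 : x1 u = 0) (ux2 : x2 u = 0) (uz0 : z0 u = 0) (uz1 : z1 u = 0)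
    (cx0 : x0 c = 0) (cx1 : x1 c = 0) (cx2 : x2 c = 0) (cz0 : z0 c = 1) (cz1 : z1 c = 0) :
    Module.finrank ℚ (Hcal ℚ M) = 4 := by
  obtain ⟨e, he⟩ : ∃ e : ℕ → M, ∀ k, e k = ((T 2 + 1) ^ k : LaurentPolynomial ℚ) • u :=
    ⟨_, fun _ => rfl⟩
  obtain ⟨f, hf⟩ : ∃ f : ℕ → M, ∀ k, f k = (T 1 * (T 2 + 1) ^ k : LaurentPolynomial ℚ) • u :=
    ⟨_, fun _ => rfl⟩
  obtain ⟨d, hd⟩ : ∃ d : M, d = (T 1 + 1 : LaurentPolynomial ℚ) • c := ⟨_, rfl⟩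
  have T2 : (T 2 : LaurentPolynomial ℚ) = T 1 * T 1 := by rw [← T_add]; norm_num
  have he3 : ∀ k, 3 ≤ k → e k = 0 := fun k hk => by
    obtain ⟨j, rfl⟩ := Nat.exists_eq_add_of_le' hk
    rw [he, pow_add, mul_smul, hu0, smul_zero]
  have ef : ∀ k, (T 1 : LaurentPolynomial ℚ) • e k = f k := fun k => by rw [he, hf, mul_smul]
  have hf3 : ∀ k, 3 ≤ k → f k = 0 := fun k hk => by rw [← ef, he3 k hk, smul_zero]
  have ff : ∀ k, (T 1 : LaurentPolynomial ℚ) • f k = - e k + e (k+1) := fun k => by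
    rw [he, hf, he, ← neg_smul, ← add_smul, smul_smul]; congr 1; rw [T2]; ring
  have cc : (T 1 : LaurentPolynomial ℚ) • c = - c + d := by
    rw [hd, add_smul, one_smul]; abel
  have dd : (T 1 : LaurentPolynomial ℚ) • d = - d := by
    have : (T 1 : LaurentPolynomial ℚ) • d + d = 0 := by
      rw [hd, smul_smul, ← add_smul, ← hc0]; congr 1; ring
    exact eq_neg_of_add_eq_zero_left this
  have e0 : e 0 = u := by rw [he, pow_zero, one_smul]
  have e1 : e 1 = (T 1 : LaurentPolynomial ℚ) • (T 1 : LaurentPolynomial ℚ) • u + u := by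
    rw [he, pow_one, T2, add_smul, mul_smul, one_smul]
  have hd' : d = (T 1 : LaurentPolynomial ℚ) • c + c := by rw [hd, add_smul, one_smul]
  have I2 := Complex.I_mul_I
  let v : Fin 4 → Hcal ℚ M := ![hmk M (e 0) (e 1) c, hmk M (e 0) (f 1) c,
    hmk M (e 0) (e 1) d, hmk M (e 0) (f 1) d]
  -- spanning
  have hspan : Submodule.span ℚ (Set.range v) = ⊤ := by
    by_contra hne
    obtain ⟨ψ, hψ0, hψ⟩ := Submodule.exists_le_ker_of_lt_top _ (lt_top_iff_ne_top.2 hne)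
    apply hψ0
    let F : M [⋀^Fin 3]→ₗ[ℚ] ℚ :=
      (ψ.comp (wedgeHol ℚ M).mkQ).compAlternatingMap (exteriorPower.ιMulti ℚ 3)
    have hF : ∀ a b c, F ![a, b, c] = ψ (hmk M a b c) := fun a b c => rfl
    obtain ⟨p1, p2, p3, p4⟩ := alt_props F
    have hv : ∀ i, ψ (v i) = 0 := fun i => hψ (Submodule.subset_span ⟨i, rfl⟩)
    have hz := span_aux (fun a b c => F ![a, b, c]) p1 p2 p3 p4 _
      (spanning_aux u c e f hgen he hf he3 d hd hc0 _ rfl)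
      (vanish_aux (fun a b c => F ![a, b, c]) p1 p3 p4
        (fun x => (T 1 : LaurentPolynomial ℚ) • x)
        (fun a b c => by simp only [hF]; rw [hmk_inv]) e f c d he3 hf3 ef ff cc dd
        (hv 0) (hv 1) (hv 2) (hv 3) _ rfl)
    have h0 : ψ.comp (wedgeHol ℚ M).mkQ = 0 := by
      apply exteriorPower.linearMap_ext
      ext m
      have : m = ![m 0, m 1, m 2] := by ext i; fin_cases i <;> rfl
      rw [this]
      exact hz _ _ _
    refine LinearMap.ext fun x => ?_
    obtain ⟨y, rfl⟩ := (wedgeHol ℚ M).mkQ_surjective x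
    exact LinearMap.congr_fun h0 y
  -- independence
  obtain ⟨L1, hL1⟩ := hcal_lift M (detForm x0 x1 z0) (fun a b c => by
    simp only [detForm_apply, tx0, tx1, tz0]
    linear_combination (x0 a * x1 b * z0 c - x0 a * z0 b * x1 c - x1 a * x0 b * z0 c
      + x1 a * z0 b * x0 c + z0 a * x0 b * x1 c - z0 a * x1 b * x0 c) * I2)
  obtain ⟨L2, hL2⟩ := hcal_lift M (detForm x0 x2 z0 - detForm x0 x1 z1) (fun a b c => by
    simp only [AlternatingMap.sub_apply, detForm_apply, tx0, tx1, tx2, tz0, tz1]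
    linear_combination (x0 a * x2 b * z0 c - x0 a * z0 b * x2 c - x2 a * x0 b * z0 c
      + x2 a * z0 b * x0 c + z0 a * x0 b * x2 c - z0 a * x2 b * x0 c
      - (x0 a * x1 b * z1 c - x0 a * z1 b * x1 c - x1 a * x0 b * z1 c
      + x1 a * z1 b * x0 c + z1 a * x0 b * x1 c - z1 a * x1 b * x0 c)) * I2)
  have hlin : LinearIndependent ℚ v := by
    rw [Fintype.linearIndependent_iff]
    intro r hr
    simp only [Fin.sum_univ_four] at hr
    have k1 := congrArg L1 hr
    have k2 := congrArg L2 hr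
    simp only [v, map_add, map_smul, map_zero, Matrix.cons_val_zero, Matrix.cons_val_one,
      Matrix.cons_val, hL1, hL2, AlternatingMap.sub_apply, detForm_apply, ← ef, e0, e1, hd',
      tx0, tx1, tx2, tz0, tz1, ux0, ux1, ux2, uz0, uz1, cx0, cx1, cx2, cz0, cz1] at k1 k2
    have w1 : (-2 : ℂ) * r 0 - 2 * r 1 * Complex.I = 0 := by
      simp only [Rat.smul_def] at k1
      ring_nf at k1
      simp only [Complex.I_sq, show Complex.I ^ 3 = - Complex.I from Complex.I_pow_three] at k1
      linear_combination k1
    have w2 : (-2 : ℂ) * r 0 - 4 * r 1 * Complex.I - 2 * r 2 - 2 * r 3 * Complex.I = 0 := by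
      simp only [Rat.smul_def] at k2
      ring_nf at k2
      simp only [Complex.I_sq, show Complex.I ^ 3 = - Complex.I from Complex.I_pow_three] at k2
      linear_combination k2
    have a1 := congrArg Complex.re w1
    have a2 := congrArg Complex.im w1
    have a3 := congrArg Complex.re w2
    have a4 := congrArg Complex.im w2
    simp at a1 a2 a3 a4
    rw [a1] at a3
    rw [a2] at a4
    simp at a3 a4
    intro i
    fin_cases i
    · exact a1
    · exact a2
    · exact a3
    · exact a4
  have := Module.finrank_eq_card_basis (Module.Basis.mk hlin hspan.ge)
  simpa using this

open PowerSeries in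
theorem functional_aux (a : ℂ) (ha : a ≠ 0) (p : LaurentPolynomial ℚ) :
    ∃ χ : LaurentPolynomial ℚ →+* PowerSeries ℂ,
      (∀ n : ℕ, χ (T n) = (PowerSeries.C a * PowerSeries.exp ℂ) ^ n) ∧
      ∀ N : ℕ, (PowerSeries.X ^ N : PowerSeries ℂ) ∣ χ p →
        ∀ k, k < N → ∃ x : LQuot ℚ p →ₗ[ℚ] ℂ, ∀ q : LaurentPolynomial ℚ,
          x (Ideal.Quotient.mk _ q) = PowerSeries.coeff k (χ q) := by
  have hU : IsUnit (PowerSeries.C a * PowerSeries.exp ℂ) :=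
    ((isUnit_iff_ne_zero.2 ha).map PowerSeries.C).mul (PowerSeries.isUnit_exp ℂ)
  obtain ⟨w, hw⟩ := hU
  refine ⟨LaurentPolynomial.eval₂ (algebraMap ℚ (PowerSeries ℂ)) w, fun n => ?_, ?_⟩
  · rw [LaurentPolynomial.eval₂_T_n, hw]
  generalize LaurentPolynomial.eval₂ (algebraMap ℚ (PowerSeries ℂ)) w = χ
  intro N hN k hk
  let G : LaurentPolynomial ℚ →ₗ[ℚ] ℂ :=
    ((PowerSeries.coeff k : PowerSeries ℂ →ₗ[ℂ] ℂ).toAddMonoidHom.comp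
      χ.toAddMonoidHom).toRatLinearMap
  have hG : ∀ q, G q = PowerSeries.coeff k (χ q) := fun q => rfl
  have hker : (Ideal.span {p}).restrictScalars ℚ ≤ LinearMap.ker G := by
    intro q hq
    rw [Submodule.restrictScalars_mem, Ideal.mem_span_singleton] at hq
    obtain ⟨s, rfl⟩ := hq
    rw [LinearMap.mem_ker, hG, map_mul]
    exact PowerSeries.X_pow_dvd_iff.1 (hN.mul_right _) k hk
  exact ⟨(Submodule.liftQ _ G hker).comp
    (Submodule.Quotient.restrictScalarsEquiv ℚ (Ideal.span {p})).symm.toLinearMap, fun q => rfl⟩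

theorem stmt17 : Module.finrank ℚ (Hcal ℚ Amod) = 4 := by
  obtain ⟨χ, hχT, hχ⟩ := functional_aux Complex.I Complex.I_ne_zero ((T 2 + 1) ^ 3)
  obtain ⟨η, hηT, hη⟩ := functional_aux (-1) (by norm_num) ((T 1 + 1) ^ 2)
  have c0 : PowerSeries.coeff 0 (PowerSeries.exp ℂ) = 1 := by simp [PowerSeries.coeff_exp]
  have c1 : PowerSeries.coeff 1 (PowerSeries.exp ℂ) = 1 := by simp [PowerSeries.coeff_exp]
  have c2 : PowerSeries.coeff 2 (PowerSeries.exp ℂ) = 1 / 2 := by simp [PowerSeries.coeff_exp]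
  have hd1 : (PowerSeries.X ^ 3 : PowerSeries ℂ) ∣ χ ((T 2 + 1) ^ 3) := by
    rw [map_pow]
    apply pow_dvd_pow_of_dvd
    rw [PowerSeries.X_dvd_iff, map_add, map_one, show (2 : ℤ) = ((2 : ℕ) : ℤ) from rfl, hχT]
    simp
  have hd2 : (PowerSeries.X ^ 2 : PowerSeries ℂ) ∣ η ((T 1 + 1) ^ 2) := by
    rw [map_pow]
    apply pow_dvd_pow_of_dvd
    rw [PowerSeries.X_dvd_iff, map_add, map_one, show (1 : ℤ) = ((1 : ℕ) : ℤ) from rfl, hηT]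
    simp
  have hχ1 : χ (T 1) = PowerSeries.C Complex.I * PowerSeries.exp ℂ := by
    have := hχT 1; rwa [pow_one] at this
  have hη1 : η (T 1) = PowerSeries.C (-1) * PowerSeries.exp ℂ := by
    have := hηT 1; rwa [pow_one] at this
  obtain ⟨x0, hx0⟩ := hχ 3 hd1 0 (by norm_num)
  obtain ⟨x1, hx1⟩ := hχ 3 hd1 1 (by norm_num)
  obtain ⟨x2, hx2⟩ := hχ 3 hd1 2 (by norm_num)
  obtain ⟨z0, hz0⟩ := hη 2 hd2 0 (by norm_num)
  obtain ⟨z1, hz1⟩ := hη 2 hd2 1 (by norm_num)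
  have co0 : ∀ (a : ℂ) (s : PowerSeries ℂ), PowerSeries.coeff 0 (PowerSeries.C a *
      PowerSeries.exp ℂ * s) = a * PowerSeries.coeff 0 s := fun a s => by
    rw [mul_assoc, PowerSeries.coeff_C_mul, PowerSeries.coeff_mul]
    simp [c0]
  have co1 : ∀ (a : ℂ) (s : PowerSeries ℂ), PowerSeries.coeff 1 (PowerSeries.C a *
      PowerSeries.exp ℂ * s) = a * (PowerSeries.coeff 1 s + PowerSeries.coeff 0 s) := fun a s => by
    rw [mul_assoc, PowerSeries.coeff_C_mul, PowerSeries.coeff_mul,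
      Finset.Nat.sum_antidiagonal_eq_sum_range_succ_mk]
    simp only [Finset.sum_range_succ, Finset.sum_range_zero, c0, c1]
    norm_num
  have co2 : ∀ (a : ℂ) (s : PowerSeries ℂ), PowerSeries.coeff 2 (PowerSeries.C a *
      PowerSeries.exp ℂ * s) = a * (PowerSeries.coeff 2 s + PowerSeries.coeff 1 s
        + PowerSeries.coeff 0 s / 2) := fun a s => by
    rw [mul_assoc, PowerSeries.coeff_C_mul, PowerSeries.coeff_mul,
      Finset.Nat.sum_antidiagonal_eq_sum_range_succ_mk]
    simp only [Finset.sum_range_succ, Finset.sum_range_zero, c0, c1, c2]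
    norm_num
    ring_nf
    simp
  have one1 : ∀ p : LaurentPolynomial ℚ, (1 : LQuot ℚ p) = Ideal.Quotient.mk _ 1 := fun _ => rfl
  have smk : ∀ (p r q : LaurentPolynomial ℚ), r • (Ideal.Quotient.mk (Ideal.span {p}) q)
      = Ideal.Quotient.mk (Ideal.span {p}) (r * q) := fun _ _ _ => rfl
  refine main_aux Amod (1, 0) (0, 1) ?_ ?_ ?_ (x0.comp (LinearMap.fst ℚ _ _))
    (x1.comp (LinearMap.fst ℚ _ _)) (x2.comp (LinearMap.fst ℚ _ _))
    (z0.comp (LinearMap.snd ℚ _ _)) (z1.comp (LinearMap.snd ℚ _ _))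
    ?_ ?_ ?_ ?_ ?_ ?_ ?_ ?_ ?_ ?_ ?_ ?_ ?_ ?_ ?_
  · rintro ⟨x, y⟩
    obtain ⟨p, rfl⟩ := Ideal.Quotient.mk_surjective x
    obtain ⟨q, rfl⟩ := Ideal.Quotient.mk_surjective y
    refine ⟨p, q, ?_⟩
    rw [one1, one1]
    simp only [Prod.smul_mk, smk, smul_zero, Prod.mk_add_mk, mul_one, add_zero, zero_add]
  · rw [one1, Prod.smul_mk, smk, smul_zero, mul_one]
    exact Prod.ext (Ideal.Quotient.eq_zero_iff_mem.2 (Ideal.mem_span_singleton_self _)) rfl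
  · rw [one1, Prod.smul_mk, smk, smul_zero, mul_one]
    exact Prod.ext rfl (Ideal.Quotient.eq_zero_iff_mem.2 (Ideal.mem_span_singleton_self _))
  · rintro ⟨x, y⟩
    obtain ⟨p, rfl⟩ := Ideal.Quotient.mk_surjective x
    simp only [LinearMap.comp_apply, LinearMap.fst_apply, Prod.smul_mk, smk, hx0, RingHom.map_mul χ, hχ1, co0]
  · rintro ⟨x, y⟩
    obtain ⟨p, rfl⟩ := Ideal.Quotient.mk_surjective x
    simp only [LinearMap.comp_apply, LinearMap.fst_apply, Prod.smul_mk, smk, hx0, hx1, RingHom.map_mul χ,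
      hχ1, co1]
  · rintro ⟨x, y⟩
    obtain ⟨p, rfl⟩ := Ideal.Quotient.mk_surjective x
    simp only [LinearMap.comp_apply, LinearMap.fst_apply, Prod.smul_mk, smk, hx0, hx1, hx2,
      RingHom.map_mul χ, hχ1, co2]
  · rintro ⟨x, y⟩
    obtain ⟨p, rfl⟩ := Ideal.Quotient.mk_surjective y
    simp only [LinearMap.comp_apply, LinearMap.snd_apply, Prod.smul_mk, smk, hz0, RingHom.map_mul η, hη1, co0]
    ring
  · rintro ⟨x, y⟩
    obtain ⟨p, rfl⟩ := Ideal.Quotient.mk_surjective y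
    simp only [LinearMap.comp_apply, LinearMap.snd_apply, Prod.smul_mk, smk, hz0, hz1, RingHom.map_mul η,
      hη1, co1]
    ring
  all_goals simp only [LinearMap.comp_apply, LinearMap.fst_apply, LinearMap.snd_apply, map_zero,
    one1, hx0, hx1, hx2, hz0, hz1]
  all_goals simp [PowerSeries.coeff_one]
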